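/- The function (w,t,τ) ↦ σ_w(t,τ) is holomorphic on {(w,t,τ) : τ ∈ H₊, w ∉ ℤ+τℤ, t ∉ ℤ+τℤ} and satisfies there the identity 2πi·∂_τ σ_w(t,τ) + ∂_t ∂_w σ_w(t,τ) = 0. (Equivalently, the differential form ω_w = σ_w(t,τ) dt − (2πi)^{−1} ∂_w σ_w(t,τ) dτ appearing in the KZB connection form Ω is closed.) -/

import Mathlib

open Complex Filter Topology MeasureTheory

noncomputable section

/-- Jacobi's theta function `ϑ₁(t,τ)`. -/
def theta1 (t τ : ℂ) : ℂ :=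
  -∑' j : ℤ, Complex.exp ((Real.pi : ℂ) * Complex.I * ((j : ℂ) + 1/2)^2 * τ +
      2 * (Real.pi : ℂ) * Complex.I * ((j : ℂ) + 1/2) * (t + 1/2))

/-- Derivative of `ϑ₁` in the first argument. -/
def theta1' (t τ : ℂ) : ℂ := deriv (fun s => theta1 s τ) t

/-- Membership in the lattice `ℤ + τℤ`. -/
def inLattice (τ t : ℂ) : Prop := ∃ a b : ℤ, t = (a : ℂ) + (b : ℂ) * τ

/-- The function `σ_w(t,τ)`. -/
def sigmaF (w t τ : ℂ) : ℂ := theta1 (w - t) τ * theta1' 0 τ / (theta1 w τ * theta1 t τ)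

/-- The function `ρ(t,τ) = ϑ₁'(t,τ)/ϑ₁(t,τ)`. -/
def rhoF (t τ : ℂ) : ℂ := theta1' t τ / theta1 t τ

/-- The function `E(t,τ) = ϑ₁(t,τ)/ϑ₁'(0,τ)`. -/
def EF (t τ : ℂ) : ℂ := theta1 t τ / theta1' 0 τ

end

/-!
By the heat equation `4πi ∂_τ ϑ₁ = ∂_t² ϑ₁`, the expression `2πi ∂_τ σ_w + ∂_t ∂_w σ_w` involves
only derivatives in the first argument, and clearing denominators turns its vanishing into
`ϑ₁'(0) (∂_x + ∂_y + ∂_z)² (ϑ₁(x) ϑ₁(y) ϑ₁(z)) = ϑ₁'''(0) ϑ₁(x) ϑ₁(y) ϑ₁(z)` on `x + y + z = 0`,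
taken at `(x, y, z) = (t, w - t, -w)`. For fixed `w`, the difference of the two sides is an entire
function of `t` with the same factors of automorphy as `ϑ₁(t) ϑ₁(w - t)`, and it vanishes at the
zeros of that product, which are simple. By Liouville's theorem it is a constant multiple of the
product, and the constant is zero because the derivative of the difference at `t = 0` vanishes.

That `ϑ₁(·, τ)` has simple zeros, exactly at the lattice points, follows from the same Liouville
argument: it shows that `ϑ₁` is a constant multiple of the theta product
`exp(-πit) ∏_{n ≥ 0} (1 - qⁿ x) (1 - qⁿ⁺¹ / x)`, with `q = exp(2πiτ)` and `x = exp(2πit)`.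
-/

section Lattice

variable {τ : ℂ}

theorem periodic_of_inLattice {α : Type*} {F : ℂ → α} (h1 : Function.Periodic F 1)
    (hτ : Function.Periodic F τ) {l : ℂ} (hl : inLattice τ l) : Function.Periodic F l := by
  obtain ⟨a, b, rfl⟩ := hl
  simpa using (h1.int_mul a).add_period (hτ.int_mul b)

theorem inLattice.add {x y : ℂ} (hx : inLattice τ x) (hy : inLattice τ y) :
    inLattice τ (x + y) := by
  obtain ⟨a, b, rfl⟩ := hx
  obtain ⟨c, d, rfl⟩ := hy
  exact ⟨a + c, b + d, by push_cast; ring⟩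

theorem exists_fract_add_inLattice (hτ : 0 < τ.im) (z : ℂ) :
    ∃ x ∈ Set.Icc (0 : ℝ) 1, ∃ y ∈ Set.Icc (0 : ℝ) 1, ∃ l, inLattice τ l ∧ z = x + y * τ + l := by
  set y := z.im / τ.im
  set x := z.re - y * τ.re
  have hz : z = x + y * τ := by
    apply Complex.ext <;> simp [x, y, hτ.ne']
  have fract_mem (r : ℝ) : Int.fract r ∈ Set.Icc (0 : ℝ) 1 :=
    ⟨Int.fract_nonneg r, (Int.fract_lt_one r).le⟩
  have fract_add (r : ℝ) : (r : ℂ) = Int.fract r + ⌊r⌋ :=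
    mod_cast (Int.fract_add_floor r).symm
  refine ⟨Int.fract x, fract_mem x, Int.fract y, fract_mem y, _, ⟨⌊x⌋, ⌊y⌋, rfl⟩, ?_⟩
  linear_combination hz + fract_add x + fract_add y * τ

theorem apply_eq_apply_of_doublyPeriodic (hτ : 0 < τ.im) {h : ℂ → ℂ} (hd : Differentiable ℂ h)
    (h1 : Function.Periodic h 1) (h2 : Function.Periodic h τ) (z w : ℂ) : h z = h w := by
  have hcompact : IsCompact
      ((fun p : ℝ × ℝ => h (p.1 + p.2 * τ)) '' (Set.Icc 0 1 ×ˢ Set.Icc 0 1)) :=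
    (isCompact_Icc.prod isCompact_Icc).image (hd.continuous.comp (by fun_prop))
  refine hd.apply_eq_apply_of_bounded (hcompact.isBounded.subset ?_) z w
  rintro _ ⟨u, rfl⟩
  obtain ⟨x, hx, y, hy, l, hl, rfl⟩ := exists_fract_add_inLattice hτ u
  exact ⟨(x, y), ⟨hx, hy⟩, (periodic_of_inLattice h1 h2 hl _).symm⟩

end Lattice

section SimpleZeros

/-- `z` is a zero of order one of `f`. -/
def IsSimpleZero (f : ℂ → ℂ) (z : ℂ) : Prop := f z = 0 ∧ deriv f z ≠ 0

theorem IsSimpleZero.mul {u v : ℂ → ℂ} {z : ℂ} (hu : IsSimpleZero u z)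
    (hud : DifferentiableAt ℂ u z) (hvd : DifferentiableAt ℂ v z) (hv : v z ≠ 0) :
    IsSimpleZero (fun z => u z * v z) z := by
  refine ⟨mul_eq_zero_of_left hu.1 _, ?_⟩
  rw [deriv_fun_mul hud hvd, hu.1, zero_mul, add_zero]
  exact mul_ne_zero hu.2 hv

theorem isSimpleZero_comp_const_sub {f : ℂ → ℂ} {w z : ℂ} :
    IsSimpleZero (fun z => f (w - z)) z ↔ IsSimpleZero f (w - z) := by
  rw [IsSimpleZero, IsSimpleZero, deriv_comp_const_sub, neg_ne_zero]

theorem IsSimpleZero.differentiableAt_div {f g : ℂ → ℂ} {z₀ : ℂ} (hf : Differentiable ℂ f)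
    (hg : Differentiable ℂ g) (hf₀ : f z₀ = 0) (hg₀ : IsSimpleZero g z₀) :
    DifferentiableAt ℂ (fun z => if g z = 0 then deriv f z / deriv g z else f z / g z) z₀ := by
  have dslope_entire {u : ℂ → ℂ} (hu : Differentiable ℂ u) : DifferentiableAt ℂ (dslope u z₀) z₀ :=
    ((Complex.differentiableOn_dslope univ_mem).2 hu.differentiableOn).differentiableAt univ_mem
  have hslope : dslope g z₀ z₀ ≠ 0 := by rw [dslope_same]; exact hg₀.2
  refine ((dslope_entire hf).div (dslope_entire hg) hslope).congr_of_eventuallyEq ?_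
  filter_upwards [(dslope_entire hg).continuousAt.eventually_ne hslope] with z hz
  rcases eq_or_ne z z₀ with rfl | hne
  · simp [hg₀.1, dslope_same]
  have f_eq : (z - z₀) * dslope f z₀ z = f z := by simpa [hf₀] using sub_smul_dslope f z₀ z
  have g_eq : (z - z₀) * dslope g z₀ z = g z := by simpa [hg₀.1] using sub_smul_dslope g z₀ z
  have hsub : z - z₀ ≠ 0 := sub_ne_zero.2 hne
  have hgz : g z ≠ 0 := g_eq ▸ mul_ne_zero hsub hz
  rw [if_neg hgz, ← f_eq, ← g_eq, Pi.div_apply, mul_div_mul_left _ _ hsub]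

theorem exists_differentiable_eq_mul {f g : ℂ → ℂ} (hf : Differentiable ℂ f)
    (hg : Differentiable ℂ g) (hz : ∀ z, g z = 0 → f z = 0 ∧ IsSimpleZero g z) :
    ∃ h : ℂ → ℂ, Differentiable ℂ h ∧ ∀ z, f z = g z * h z := by
  refine ⟨fun z => if g z = 0 then deriv f z / deriv g z else f z / g z, fun z₀ => ?_, fun z => ?_⟩
  · by_cases h0 : g z₀ = 0
    · exact (hz z₀ h0).2.differentiableAt_div hf hg (hz z₀ h0).1
    · refine ((hf z₀).div (hg z₀) h0).congr_of_eventuallyEq ?_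
      filter_upwards [(hg z₀).continuousAt.eventually_ne h0] with z hne
      rw [if_neg hne, Pi.div_apply]
  · by_cases h0 : g z = 0
    · rw [(hz z h0).1, h0, zero_mul]
    · simp only [if_neg h0, mul_div_cancel₀ _ h0]

theorem eq_of_mul_eq_mul_of_differentiable {g u v : ℂ → ℂ} (hg : Differentiable ℂ g)
    (hu : Differentiable ℂ u) (hv : Differentiable ℂ v) (hne : g ≠ 0)
    (h : ∀ z, g z * u z = g z * v z) : u = v := by
  have analytic {F : ℂ → ℂ} (hF : Differentiable ℂ F) : AnalyticOnNhd ℂ F Set.univ :=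
    fun z _ => hF.analyticAt z
  rcases (analytic hg).eq_zero_or_eq_zero_of_mul_eq_zero (analytic (hu.sub hv))
    (fun z _ => by rw [Pi.sub_apply, mul_sub, h z, sub_self]) isPreconnected_univ with h0 | h0
  · exact absurd (funext fun z => h0 z trivial) hne
  · exact funext fun z => sub_eq_zero.1 (h0 z trivial)

end SimpleZeros

section QuasiPeriodic

/-- `f` is a theta function with respect to the period `l`: translating the argument by `l`
multiplies `f` by the exponential factor `z ↦ exp (a * z + b)`. -/
def QuasiPeriodic (f : ℂ → ℂ) (l a b : ℂ) : Prop := ∀ z, f (z + l) = cexp (a * z + b) * f z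

theorem hasDerivAt_cexp_affine_mul {f : ℂ → ℂ} {f' z : ℂ} (hf : HasDerivAt f f' z) (a b : ℂ) :
    HasDerivAt (fun z => cexp (a * z + b) * f z) (cexp (a * z + b) * (f' + a * f z)) z := by
  have := (((hasDerivAt_id z).const_mul a).add_const b).cexp.mul hf
  exact this.congr_deriv (by simp only [id]; ring)

namespace QuasiPeriodic

variable {f g : ℂ → ℂ} {l a b : ℂ}

theorem eq_zero_iff (hf : QuasiPeriodic f l a b) (z : ℂ) : f (z + l) = 0 ↔ f z = 0 := by
  rw [hf z, mul_eq_zero_iff_left (Complex.exp_ne_zero _)]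

theorem deriv_add (hf : QuasiPeriodic f l a b) (hd : Differentiable ℂ f) (z : ℂ) :
    deriv f (z + l) = cexp (a * z + b) * (deriv f z + a * f z) := by
  rw [← deriv_comp_add_const, show (fun z => f (z + l)) = _ from funext hf]
  exact (hasDerivAt_cexp_affine_mul (hd z).hasDerivAt a b).deriv

theorem isSimpleZero_iff (hf : QuasiPeriodic f l a b) (hd : Differentiable ℂ f) (z : ℂ) :
    IsSimpleZero f (z + l) ↔ IsSimpleZero f z := by
  rw [IsSimpleZero, IsSimpleZero, hf.eq_zero_iff, hf.deriv_add hd]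
  refine and_congr_right fun hz => ?_
  rw [hz, mul_zero, add_zero, mul_ne_zero_iff_left (Complex.exp_ne_zero _)]

theorem periodic_of_eq_mul {h : ℂ → ℂ} (hf : QuasiPeriodic f l a b) (hg : QuasiPeriodic g l a b)
    (hgd : Differentiable ℂ g) (hhd : Differentiable ℂ h) (hne : g ≠ 0)
    (hfgh : ∀ z, f z = g z * h z) : Function.Periodic h l := by
  refine congrFun (eq_of_mul_eq_mul_of_differentiable hgd (u := fun z => h (z + l))
    (hhd.comp (by fun_prop)) hhd hne fun z => mul_left_cancel₀ (Complex.exp_ne_zero (a * z + b)) ?_)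
  calc cexp (a * z + b) * (g z * h (z + l)) = f (z + l) := by rw [hfgh, hg z, mul_assoc]
    _ = cexp (a * z + b) * (g z * h z) := by rw [hf z, hfgh]

theorem of_exchange {P : ℂ → ℂ → ℂ}
    (hP : ∀ x y, cexp (a * y + b) * P (x + l) y = cexp (a * x + b) * P x (y + l)) (w : ℂ) :
    QuasiPeriodic (fun x => P x (w - x)) l (2 * a) (-(a * (w - l))) := by
  intro x
  refine mul_left_cancel₀ (Complex.exp_ne_zero (a * (w - (x + l)) + b)) ?_
  rw [hP, ← mul_assoc, ← Complex.exp_add]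
  ring_nf

theorem mul_comp_const_sub (h : QuasiPeriodic f l a b) (w : ℂ) :
    QuasiPeriodic (fun x => f x * f (w - x)) l (2 * a) (-(a * (w - l))) :=
  of_exchange (P := fun x y => f x * f y) (fun x y => by rw [h x, h y]; ring) w

end QuasiPeriodic

variable {τ : ℂ} {f g : ℂ → ℂ} {a₁ b₁ a₂ b₂ : ℂ}

theorem eq_zero_of_inLattice (h1 : QuasiPeriodic f 1 a₁ b₁) (h2 : QuasiPeriodic f τ a₂ b₂)
    (h0 : f 0 = 0) {z : ℂ} (hz : inLattice τ z) : f z = 0 := by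
  have := periodic_of_inLattice (F := fun z => f z = 0) (fun z => propext (h1.eq_zero_iff z))
    (fun z => propext (h2.eq_zero_iff z)) hz 0
  rwa [zero_add, eq_iff_iff, iff_true_right h0] at this

theorem isSimpleZero_of_inLattice (hd : Differentiable ℂ f) (h1 : QuasiPeriodic f 1 a₁ b₁)
    (h2 : QuasiPeriodic f τ a₂ b₂) (h0 : IsSimpleZero f 0) {z : ℂ} (hz : inLattice τ z) :
    IsSimpleZero f z := by
  have := periodic_of_inLattice (F := IsSimpleZero f)
    (fun z => propext (h1.isSimpleZero_iff hd z)) (fun z => propext (h2.isSimpleZero_iff hd z)) hz 0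
  rwa [zero_add, eq_iff_iff, iff_true_right h0] at this

theorem isSimpleZero_mul_comp_const_sub (hg : Differentiable ℂ g)
    (h1 : QuasiPeriodic g 1 a₁ b₁) (h2 : QuasiPeriodic g τ a₂ b₂) (h0 : IsSimpleZero g 0)
    (hzero : ∀ z, g z = 0 → inLattice τ z) {w x : ℂ} (hw : g w ≠ 0) (hx : g x * g (w - x) = 0) :
    IsSimpleZero (fun x => g x * g (w - x)) x := by
  have hsimple {z : ℂ} (hz : g z = 0) : IsSimpleZero g z :=
    isSimpleZero_of_inLattice hg h1 h2 h0 (hzero z hz)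
  have hne : ¬(g x = 0 ∧ g (w - x) = 0) := fun ⟨hx, hwx⟩ => hw <|
    eq_zero_of_inLattice h1 h2 h0.1 (add_sub_cancel x w ▸ (hzero x hx).add (hzero _ hwx))
  have hgr : Differentiable ℂ fun x => g (w - x) := hg.comp (by fun_prop)
  rcases mul_eq_zero.1 hx with hx | hwx
  · exact (hsimple hx).mul (hg x) (hgr x) fun hwx => hne ⟨hx, hwx⟩
  · simpa only [mul_comm] using
      (isSimpleZero_comp_const_sub.2 (hsimple hwx)).mul (hgr x) (hg x) fun hx => hne ⟨hx, hwx⟩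

theorem exists_eq_const_mul_of_quasiPeriodic (hτ : 0 < τ.im) (hf : Differentiable ℂ f)
    (hg : Differentiable ℂ g) (hf1 : QuasiPeriodic f 1 a₁ b₁) (hg1 : QuasiPeriodic g 1 a₁ b₁)
    (hf2 : QuasiPeriodic f τ a₂ b₂) (hg2 : QuasiPeriodic g τ a₂ b₂)
    (hz : ∀ z, g z = 0 → f z = 0 ∧ IsSimpleZero g z) : ∃ C, ∀ z, f z = C * g z := by
  have hne : g ≠ 0 := by
    rintro rfl
    exact (hz 0 rfl).2.2 (deriv_const 0 0)
  obtain ⟨h, hhd, hfgh⟩ := exists_differentiable_eq_mul hf hg hz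
  have hconst := apply_eq_apply_of_doublyPeriodic hτ hhd
    (hf1.periodic_of_eq_mul hg1 hg hhd hne hfgh) (hf2.periodic_of_eq_mul hg2 hg hhd hne hfgh)
  exact ⟨h 0, fun z => by rw [hfgh z, hconst z 0, mul_comm]⟩

end QuasiPeriodic

section ThetaSeries

variable {τ : ℂ}

theorem hasDerivAt_tsum_of_summable_norm {ι : Type*} {u : ι → ℝ} {F F' : ι → ℂ → ℂ} {U : Set ℂ}
    {z : ℂ} (hu : Summable u) (hF : ∀ i, ∀ w ∈ U, HasDerivAt (F i) (F' i w) w) (hU : IsOpen U)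
    (hbound : ∀ i, ∀ w ∈ U, ‖F i w‖ ≤ u i) (hz : z ∈ U) :
    HasDerivAt (fun w => ∑' i, F i w) (∑' i, F' i z) z := by
  have hd (i : ι) : DifferentiableOn ℂ (F i) U := fun w hw =>
    (hF i w hw).differentiableAt.differentiableWithinAt
  have hsum := Complex.hasSum_deriv_of_summable_norm hu hd hU hbound hz
  rw [tsum_congr fun i => ((hF i z hz).deriv).symm, hsum.tsum_eq]
  exact ((Complex.differentiableOn_tsum_of_summable_norm hu hd hU hbound).differentiableAt
    (hU.mem_nhds hz)).hasDerivAt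

/-- The `k`-th derivative in `t` of the `j`-th term of the series defining `ϑ₁(t,τ)`. -/
noncomputable def theta1Term (k : ℕ) (j : ℤ) (t τ : ℂ) : ℂ :=
  (2 * Real.pi * I * (j + 1 / 2)) ^ k *
    cexp (Real.pi * I * (j + 1 / 2) ^ 2 * τ + 2 * Real.pi * I * (j + 1 / 2) * (t + 1 / 2))

/-- The `k`-th derivative of `ϑ₁(t,τ)` in `t`, defined by termwise differentiation of the series. -/
noncomputable def theta1Deriv (k : ℕ) (t τ : ℂ) : ℂ := -∑' j : ℤ, theta1Term k j t τ

theorem theta1Deriv_zero (t τ : ℂ) : theta1Deriv 0 t τ = theta1 t τ := by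
  simp only [theta1Deriv, theta1Term, theta1, pow_zero, one_mul]

theorem hasDerivAt_theta1Term (k : ℕ) (j : ℤ) (t τ : ℂ) :
    HasDerivAt (fun s => theta1Term k j s τ) (theta1Term (k + 1) j t τ) t := by
  have hexp := ((((hasDerivAt_id t).add_const (1 / 2)).const_mul
    (2 * Real.pi * I * (j + 1 / 2))).const_add (Real.pi * I * (j + 1 / 2) ^ 2 * τ)).cexp
  refine (hexp.const_mul ((2 * Real.pi * I * (j + 1 / 2)) ^ k)).congr_deriv ?_
  simp only [theta1Term, id]
  ring

theorem hasDerivAt_theta1Term_tau (k : ℕ) (j : ℤ) (t τ : ℂ) :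
    HasDerivAt (fun s => theta1Term k j t s)
      ((4 * Real.pi * I)⁻¹ * theta1Term (k + 2) j t τ) τ := by
  have hexp := (((hasDerivAt_id τ).const_mul (Real.pi * I * (j + 1 / 2) ^ 2)).add_const
    (2 * Real.pi * I * (j + 1 / 2) * (t + 1 / 2))).cexp
  refine (hexp.const_mul ((2 * Real.pi * I * (j + 1 / 2)) ^ k)).congr_deriv ?_
  have hpi : (Real.pi : ℂ) ≠ 0 := ofReal_ne_zero.2 Real.pi_ne_zero
  simp only [theta1Term, id, pow_add]
  field_simp
  ring

theorem norm_theta1Term (k : ℕ) (j : ℤ) (t τ : ℂ) :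
    ‖theta1Term k j t τ‖ = (2 * Real.pi * |(j : ℝ) + 1 / 2|) ^ k *
      Real.exp (-Real.pi * ((j + 1 / 2) ^ 2 * τ.im + 2 * (j + 1 / 2) * t.im)) := by
  have hj : (j + 1 / 2 : ℂ) = ((j + 1 / 2 : ℝ) : ℂ) := by push_cast; rfl
  rw [theta1Term, hj, norm_mul, norm_pow, Complex.norm_exp]
  generalize (j + 1 / 2 : ℝ) = x
  congr 2
  · simp [abs_of_pos Real.pi_pos]
  · rw [show Real.pi * I * (x : ℂ) ^ 2 * τ + 2 * Real.pi * I * x * (t + 1 / 2) =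
      I * ((Real.pi * x ^ 2 : ℝ) * τ + (2 * Real.pi * x : ℝ) * (t + 1 / 2)) by push_cast; ring,
      I_mul_re, add_im, im_ofReal_mul, im_ofReal_mul, add_im,
      show (1 / 2 : ℂ).im = 0 by norm_num]
    ring

/-- A summable bound for `theta1Term k j t τ`, uniform over `|Im t| ≤ S` and `T ≤ Im τ`. -/
noncomputable def theta1Bound (k : ℕ) (S T : ℝ) (j : ℤ) : ℝ :=
  k.factorial * Real.exp (Real.pi * (S + 1)) *
    Real.exp (-Real.pi * (T * j ^ 2 - 2 * (S + 1 + T / 2) * |j|))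

theorem summable_theta1Bound (k : ℕ) (S : ℝ) {T : ℝ} (hT : 0 < T) :
    Summable (theta1Bound k S T) := by
  unfold theta1Bound
  simpa using (summable_pow_mul_jacobiTheta₂_term_bound (S + 1 + T / 2) hT 0).mul_left
    (k.factorial * Real.exp (Real.pi * (S + 1)))

theorem norm_theta1Term_le (k : ℕ) (j : ℤ) {t τ : ℂ} {S T : ℝ} (ht : |t.im| ≤ S) (hT : 0 ≤ T)
    (hτ : T ≤ τ.im) : ‖theta1Term k j t τ‖ ≤ theta1Bound k S T j := by
  have hx : |(j : ℝ) + 1 / 2| ≤ |(j : ℝ)| + 1 / 2 :=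
    (abs_add_le _ _).trans_eq (by rw [abs_of_pos (by norm_num : (0 : ℝ) < 1 / 2)])
  have hxt : -(((j : ℝ) + 1 / 2) * t.im) ≤ (|(j : ℝ)| + 1 / 2) * S :=
    (neg_le_abs _).trans (by rw [abs_mul]; gcongr)
  have hxτ : ((j : ℝ) ^ 2 - |(j : ℝ)|) * T ≤ (j + 1 / 2) ^ 2 * τ.im :=
    calc ((j : ℝ) ^ 2 - |(j : ℝ)|) * T ≤ (j + 1 / 2) ^ 2 * T := by
          gcongr
          nlinarith [neg_abs_le (j : ℝ)]
      _ ≤ _ := by gcongr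
  have hpow : (2 * Real.pi * |(j : ℝ) + 1 / 2|) ^ k ≤
      k.factorial * Real.exp (2 * Real.pi * (|(j : ℝ)| + 1 / 2)) := by
    rw [← div_le_iff₀' (by positivity)]
    exact (Real.pow_div_factorial_le_exp _ (by positivity) k).trans (by gcongr)
  calc ‖theta1Term k j t τ‖
      ≤ k.factorial * Real.exp (2 * Real.pi * (|(j : ℝ)| + 1 / 2)) *
        Real.exp (Real.pi * (2 * (|(j : ℝ)| + 1 / 2) * S - ((j : ℝ) ^ 2 - |(j : ℝ)|) * T)) := by
        rw [norm_theta1Term]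
        gcongr ?_ * Real.exp ?_
        nlinarith only [hxt, hxτ, Real.pi_pos]
    _ = theta1Bound k S T j := by
        simp only [theta1Bound, mul_assoc (k.factorial : ℝ), ← Real.exp_add]
        push_cast
        ring_nf

theorem hasDerivAt_theta1Deriv (hτ : 0 < τ.im) (k : ℕ) (t : ℂ) :
    HasDerivAt (fun s => theta1Deriv k s τ) (theta1Deriv (k + 1) t τ) t :=
  (hasDerivAt_tsum_of_summable_norm (U := {s | |s.im| < |t.im| + 1})
    (summable_theta1Bound k (|t.im| + 1) hτ) (fun j s _ => hasDerivAt_theta1Term k j s τ)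
    (isOpen_lt (by fun_prop) continuous_const)
    (fun j _ hs => norm_theta1Term_le k j (le_of_lt hs) hτ.le le_rfl) (lt_add_one |t.im|)).neg

theorem hasDerivAt_theta1Deriv_tau (hτ : 0 < τ.im) (k : ℕ) (t : ℂ) :
    HasDerivAt (fun s => theta1Deriv k t s) ((4 * Real.pi * I)⁻¹ * theta1Deriv (k + 2) t τ) τ := by
  have h := hasDerivAt_tsum_of_summable_norm (U := {s | τ.im / 2 < s.im})
    (summable_theta1Bound k |t.im| (half_pos hτ)) (fun j s _ => hasDerivAt_theta1Term_tau k j t s)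
    (isOpen_lt continuous_const Complex.continuous_im)
    (fun j _ hs => norm_theta1Term_le k j le_rfl (half_pos hτ).le (le_of_lt hs)) (half_lt_self hτ)
  rw [tsum_mul_left] at h
  exact h.neg.congr_deriv (mul_neg _ _).symm

theorem differentiable_theta1 (hτ : 0 < τ.im) : Differentiable ℂ fun t => theta1 t τ := fun t => by
  simpa only [theta1Deriv_zero] using (hasDerivAt_theta1Deriv hτ 0 t).differentiableAt

theorem theta1Deriv_one (hτ : 0 < τ.im) (t : ℂ) : theta1Deriv 1 t τ = theta1' t τ := by
  simpa only [theta1', theta1Deriv_zero] using (hasDerivAt_theta1Deriv hτ 0 t).deriv.symm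

end ThetaSeries

section ThetaTransformation

theorem theta1_eq_jacobiTheta₂ (t τ : ℂ) : theta1 t τ =
    -(cexp (Real.pi * I * τ / 4 + Real.pi * I * (t + 1 / 2)) *
      jacobiTheta₂ (t + 1 / 2 + τ / 2) τ) := by
  unfold theta1 jacobiTheta₂ jacobiTheta₂_term
  rw [← tsum_mul_left]
  congr! 3 with j
  rw [← Complex.exp_add]
  ring_nf

theorem differentiableAt_theta1_prod {p : ℂ × ℂ} (hp : 0 < p.2.im) :
    DifferentiableAt ℂ (fun p : ℂ × ℂ => theta1 p.1 p.2) p := by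
  simp only [theta1_eq_jacobiTheta₂]
  have hcomp : DifferentiableAt ℂ (fun p : ℂ × ℂ => jacobiTheta₂ (p.1 + 1 / 2 + p.2 / 2) p.2) p :=
    (hasFDerivAt_jacobiTheta₂ (p.1 + 1 / 2 + p.2 / 2) hp).differentiableAt.comp p
      (f := fun p : ℂ × ℂ => (p.1 + 1 / 2 + p.2 / 2, p.2)) (by fun_prop)
  exact (DifferentiableAt.mul (by fun_prop) hcomp).neg

theorem quasiPeriodic_theta1_one (τ : ℂ) :
    QuasiPeriodic (fun t => theta1 t τ) 1 0 (Real.pi * I) := by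
  intro t
  simp only [theta1_eq_jacobiTheta₂]
  rw [show t + 1 + 1 / 2 + τ / 2 = t + 1 / 2 + τ / 2 + 1 by ring, jacobiTheta₂_add_left,
    mul_neg, ← mul_assoc, ← Complex.exp_add]
  ring_nf

theorem quasiPeriodic_theta1_tau (τ : ℂ) :
    QuasiPeriodic (fun t => theta1 t τ) τ (-(2 * Real.pi * I)) (Real.pi * I - Real.pi * I * τ) := by
  intro t
  simp only [theta1_eq_jacobiTheta₂]
  rw [show t + τ + 1 / 2 + τ / 2 = t + 1 / 2 + τ / 2 + τ by ring, jacobiTheta₂_add_left',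
    mul_neg, ← mul_assoc, ← mul_assoc, ← Complex.exp_add, ← Complex.exp_add]
  congr 2
  rw [Complex.exp_eq_exp_iff_exists_int]
  exact ⟨-1, by push_cast; ring⟩

theorem theta1_neg (t τ : ℂ) : theta1 (-t) τ = -theta1 t τ := by
  rw [theta1_eq_jacobiTheta₂, theta1_eq_jacobiTheta₂,
    show -t + 1 / 2 + τ / 2 = -(t + 1 / 2 + τ / 2) + 1 + τ by ring, jacobiTheta₂_add_left',
    jacobiTheta₂_add_left, jacobiTheta₂_neg_left, ← mul_assoc, ← Complex.exp_add, neg_neg,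
    ← neg_mul]
  congr 1
  rw [← mul_neg_one, ← Complex.exp_pi_mul_I, ← Complex.exp_add]
  ring_nf

theorem theta1_zero (τ : ℂ) : theta1 0 τ = 0 :=
  self_eq_neg.1 (by simpa using theta1_neg 0 τ)

end ThetaTransformation

section FourierUniqueness

variable {τ : ℂ}

theorem eq_zero_of_tsum_mul_fourier_eq_zero {T : ℝ} [Fact (0 < T)] {a : ℤ → ℂ}
    (ha : Summable fun n => ‖a n‖) (h : ∀ x : AddCircle T, ∑' n, a n * fourier n x = 0) (m : ℤ) :
    a m = 0 := by
  have hsummable : Summable fun n => a n • (fourier n : C(AddCircle T, ℂ)) :=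
    .of_norm (by simpa only [norm_smul, fourier_norm, mul_one] using ha)
  have htsum : ∑' n, a n • (fourier n : C(AddCircle T, ℂ)) = 0 :=
    ContinuousMap.ext fun x => by
      simpa using (ContinuousMap.hasSum_apply hsummable.hasSum x).tsum_eq.symm.trans (h x)
  have hsum : HasSum (fun n => a n • fourierLp (T := T) 2 n) 0 := by
    simpa only [map_smul, map_zero] using
      (htsum ▸ hsummable.hasSum).mapL (ContinuousMap.toLp 2 AddCircle.haarAddCircle ℂ)
  have hcoeff : HasSum (fun n => a n * if m = n then 1 else 0) 0 := by
    simpa only [map_smul, map_zero, innerSL_apply_apply, smul_eq_mul,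
      orthonormal_iff_ite.1 (orthonormal_fourier (T := T))] using
      hsum.mapL (innerSL ℂ (fourierLp (T := T) 2 m))
  simpa using (hasSum_single m fun n hn => by simp [hn.symm]).unique hcoeff

theorem exists_jacobiTheta₂_ne_zero (hτ : 0 < τ.im) : ∃ z, jacobiTheta₂ z τ ≠ 0 := by
  by_contra! hall
  have hterm (n : ℤ) (x : ℝ) :
      jacobiTheta₂_term n 0 τ * fourier n (x : UnitAddCircle) = jacobiTheta₂_term n x τ := by
    rw [fourier_coe_apply, jacobiTheta₂_term, jacobiTheta₂_term, ← Complex.exp_add]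
    simp only [mul_zero, zero_add, ofReal_one, div_one]
    ring_nf
  have hzero := eq_zero_of_tsum_mul_fourier_eq_zero
    ((summable_jacobiTheta₂_term_iff 0 τ).2 hτ).norm
    (fun x => by
      induction x using QuotientAddGroup.induction_on with
      | H x => exact (tsum_congr fun n => hterm n x).trans (hall x)) 0
  exact Complex.exp_ne_zero _ hzero

theorem exists_theta1_ne_zero (hτ : 0 < τ.im) : ∃ t, theta1 t τ ≠ 0 := by
  obtain ⟨z, hz⟩ := exists_jacobiTheta₂_ne_zero hτ
  refine ⟨z - 1 / 2 - τ / 2, ?_⟩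
  rw [theta1_eq_jacobiTheta₂, show z - 1 / 2 - τ / 2 + 1 / 2 + τ / 2 = z by ring]
  exact neg_ne_zero.2 (mul_ne_zero (Complex.exp_ne_zero _) hz)

end FourierUniqueness

section QProduct

/-- The infinite `q`-Pochhammer symbol `(x; q)_∞ = ∏_{n ≥ 0} (1 - qⁿ x)`. -/
noncomputable def qPochhammerInf (q x : ℂ) : ℂ := ∏' n : ℕ, (1 + -(q ^ n * x))

variable {q : ℂ}

theorem summable_norm_qPochhammerInf (hq : ‖q‖ < 1) (x : ℂ) :
    Summable fun n : ℕ => ‖-(q ^ n * x)‖ := by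
  simp only [norm_neg, norm_mul, norm_pow]
  exact (summable_geometric_of_lt_one (norm_nonneg _) hq).mul_right _

theorem qPochhammerInf_eq_mul (hq : ‖q‖ < 1) (x : ℂ) :
    qPochhammerInf q x = (1 - x) * qPochhammerInf q (q * x) := by
  have hshift (n : ℕ) : 1 + -(q ^ (n + 1) * x) = 1 + -(q ^ n * (q * x)) := by ring
  have hm : Multipliable fun n : ℕ => 1 + -(q ^ (n + 1) * x) :=
    multipliable_one_add_of_summable
      ((summable_nat_add_iff 1).2 (summable_norm_qPochhammerInf hq x))
  rw [qPochhammerInf, tprod_eq_zero_mul' (f := fun n : ℕ => 1 + -(q ^ n * x)) hm,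
    tprod_congr hshift, pow_zero, one_mul, ← sub_eq_add_neg, qPochhammerInf]

theorem exists_pow_mul_eq_one_of_qPochhammerInf_eq_zero (hq : ‖q‖ < 1) {x : ℂ}
    (hx : qPochhammerInf q x = 0) : ∃ n : ℕ, q ^ n * x = 1 := by
  by_contra! h
  exact tprod_one_add_ne_zero_of_summable (fun n hn => h n (by linear_combination -hn))
    (summable_norm_qPochhammerInf hq x) hx

theorem qPochhammerInf_self_ne_zero (hq : ‖q‖ < 1) : qPochhammerInf q q ≠ 0 := by
  intro h
  obtain ⟨n, hn⟩ := exists_pow_mul_eq_one_of_qPochhammerInf_eq_zero hq h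
  have hlt : ‖q ^ (n + 1)‖ < 1 := by
    rw [norm_pow]
    exact pow_lt_one₀ (norm_nonneg q) hq n.succ_ne_zero
  rw [pow_succ, hn, norm_one] at hlt
  exact lt_irrefl _ hlt

theorem differentiable_qPochhammerInf (hq : ‖q‖ < 1) : Differentiable ℂ (qPochhammerInf q) := by
  intro x₀
  have hprod := Summable.hasProdLocallyUniformlyOn_nat_one_add
    (f := fun (n : ℕ) x => -(q ^ n * x)) (K := Metric.ball 0 (‖x₀‖ + 1)) Metric.isOpen_ball
    ((summable_geometric_of_lt_one (norm_nonneg _) hq).mul_right (‖x₀‖ + 1))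
    (Eventually.of_forall fun n x hx => by
      rw [norm_neg, norm_mul, norm_pow]
      gcongr
      exact (mem_ball_zero_iff.1 hx).le)
    (fun n => by fun_prop)
  have hd : DifferentiableOn ℂ (qPochhammerInf q) (Metric.ball 0 (‖x₀‖ + 1)) :=
    hprod.differentiableOn (.of_forall fun _ => by
      simpa [Finset.prod_fn] using DifferentiableOn.finsetProd fun _ _ => by fun_prop)
      Metric.isOpen_ball
  exact hd.differentiableAt (Metric.isOpen_ball.mem_nhds (by simp))

end QProduct

section ThetaProduct

local notation "𝐞(" z ")" => cexp (2 * Real.pi * I * z)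

variable {τ : ℂ}

/-- The product side of the Jacobi triple product for `ϑ₁(t,τ)`, up to a factor independent of `t`:
`exp(-πit) (x; q)_∞ (q/x; q)_∞` with `q = exp(2πiτ)` and `x = exp(2πit)`. -/
noncomputable def thetaProduct (τ t : ℂ) : ℂ :=
  cexp (-(Real.pi * I * t)) * (qPochhammerInf 𝐞(τ) 𝐞(t) * qPochhammerInf 𝐞(τ) 𝐞(τ - t))

theorem norm_exp_two_pi_I_mul_lt_one (hτ : 0 < τ.im) : ‖𝐞(τ)‖ < 1 :=
  UpperHalfPlane.norm_exp_two_pi_I_lt_one ⟨τ, hτ⟩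

theorem differentiable_thetaProduct (hτ : 0 < τ.im) : Differentiable ℂ (thetaProduct τ) := by
  have hprod := differentiable_qPochhammerInf (norm_exp_two_pi_I_mul_lt_one hτ)
  have hcomp {u : ℂ → ℂ} (hu : Differentiable ℂ u) :
      Differentiable ℂ fun t => qPochhammerInf 𝐞(τ) (u t) := hprod.comp hu
  exact .mul (by fun_prop) (.mul (hcomp (by fun_prop)) (hcomp (by fun_prop)))

theorem quasiPeriodic_thetaProduct_one (τ : ℂ) :
    QuasiPeriodic (thetaProduct τ) 1 0 (Real.pi * I) := by
  intro t
  have hneg : cexp (-(Real.pi * I * (t + 1))) =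
      cexp (0 * t + Real.pi * I) * cexp (-(Real.pi * I * t)) := by
    rw [← Complex.exp_add, Complex.exp_eq_exp_iff_exists_int]
    exact ⟨-1, by push_cast; ring⟩
  have hx : 𝐞(t + 1) = 𝐞(t) :=
    Complex.exp_eq_exp_iff_exists_int.2 ⟨1, by push_cast; ring⟩
  have hx' : 𝐞(τ - (t + 1)) = 𝐞(τ - t) :=
    Complex.exp_eq_exp_iff_exists_int.2 ⟨-1, by push_cast; ring⟩
  rw [thetaProduct, thetaProduct, hneg, hx, hx', mul_assoc]

theorem quasiPeriodic_thetaProduct_tau (hτ : 0 < τ.im) :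
    QuasiPeriodic (thetaProduct τ) τ (-(2 * Real.pi * I)) (Real.pi * I - Real.pi * I * τ) := by
  intro t
  have hq := norm_exp_two_pi_I_mul_lt_one hτ
  have hshift : 𝐞(t + τ) = 𝐞(τ) * 𝐞(t) := by rw [← Complex.exp_add]; ring_nf
  have hinv : 𝐞(τ) * 𝐞(τ - (t + τ)) = 𝐞(τ - t) := by rw [← Complex.exp_add]; ring_nf
  have hexp : cexp (-(Real.pi * I * (t + τ))) * (1 - 𝐞(τ - (t + τ))) =
      cexp (-(2 * Real.pi * I) * t + (Real.pi * I - Real.pi * I * τ)) *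
        (cexp (-(Real.pi * I * t)) * (1 - 𝐞(t))) := by
    rw [add_sub_left_comm _ (Real.pi * I), Complex.exp_add (Real.pi * I), Complex.exp_pi_mul_I]
    simp only [mul_sub, mul_one, one_mul, neg_mul, ← Complex.exp_add]
    ring_nf
  rw [thetaProduct, thetaProduct, qPochhammerInf_eq_mul hq 𝐞(t),
    qPochhammerInf_eq_mul hq 𝐞(τ - (t + τ)), hinv, ← hshift]
  linear_combination (qPochhammerInf 𝐞(τ) 𝐞(t + τ) * qPochhammerInf 𝐞(τ) 𝐞(τ - t)) * hexp

theorem exists_add_eq_intCast_of_qPochhammerInf_eq_zero (hτ : 0 < τ.im) {s : ℂ}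
    (h : qPochhammerInf 𝐞(τ) 𝐞(s) = 0) : ∃ (n : ℕ) (m : ℤ), n * τ + s = m := by
  obtain ⟨n, hn⟩ :=
    exists_pow_mul_eq_one_of_qPochhammerInf_eq_zero (norm_exp_two_pi_I_mul_lt_one hτ) h
  rw [← Complex.exp_nat_mul, ← Complex.exp_add, Complex.exp_eq_one_iff] at hn
  obtain ⟨m, hm⟩ := hn
  exact ⟨n, m, mul_left_cancel₀ Complex.two_pi_I_ne_zero (by linear_combination hm)⟩

theorem inLattice_of_thetaProduct_eq_zero (hτ : 0 < τ.im) {t : ℂ} (h : thetaProduct τ t = 0) :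
    inLattice τ t := by
  rcases mul_eq_zero.1 ((mul_eq_zero.1 h).resolve_left (Complex.exp_ne_zero _)) with h | h
  · obtain ⟨n, m, hm⟩ := exists_add_eq_intCast_of_qPochhammerInf_eq_zero hτ h
    exact ⟨m, -n, by push_cast; linear_combination hm⟩
  · obtain ⟨n, m, hm⟩ := exists_add_eq_intCast_of_qPochhammerInf_eq_zero hτ h
    exact ⟨-m, n + 1, by push_cast; linear_combination -hm⟩

theorem isSimpleZero_thetaProduct_zero (hτ : 0 < τ.im) : IsSimpleZero (thetaProduct τ) 0 := by
  set q := 𝐞(τ) with hqτ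
  have hq : ‖q‖ < 1 := norm_exp_two_pi_I_mul_lt_one hτ
  set cofactor : ℂ → ℂ := fun t => cexp (-(Real.pi * I * t)) *
    (qPochhammerInf q (q * 𝐞(t)) * qPochhammerInf q 𝐞(τ - t))
  have hfactor : thetaProduct τ = fun t => (1 - 𝐞(t)) * cofactor t := by
    funext t
    rw [thetaProduct, qPochhammerInf_eq_mul hq 𝐞(t)]
    ring
  have hcofactor : DifferentiableAt ℂ cofactor 0 := by
    have hcomp {u : ℂ → ℂ} (hu : Differentiable ℂ u) :
        Differentiable ℂ fun t => qPochhammerInf q (u t) :=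
      (differentiable_qPochhammerInf hq).comp hu
    exact .mul (by fun_prop) (.mul (hcomp (by fun_prop) 0) (hcomp (by fun_prop) 0))
  have hcofactor_zero : cofactor 0 ≠ 0 := by
    simpa [cofactor, ← hqτ] using qPochhammerInf_self_ne_zero hq
  have hlinear : HasDerivAt (fun t : ℂ => 1 - 𝐞(t)) (-(2 * Real.pi * I)) 0 := by
    simpa using (((hasDerivAt_id (0 : ℂ)).const_mul (2 * Real.pi * I)).cexp).const_sub 1
  have hderiv : HasDerivAt (thetaProduct τ) (-(2 * Real.pi * I) * cofactor 0) 0 := by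
    rw [hfactor]
    exact (hlinear.mul hcofactor.hasDerivAt).congr_deriv (by simp)
  refine ⟨by simp [hfactor], ?_⟩
  rw [hderiv.deriv]
  exact mul_ne_zero (neg_ne_zero.2 Complex.two_pi_I_ne_zero) hcofactor_zero

end ThetaProduct

section ThetaZeros

variable {τ : ℂ}

theorem exists_theta1_eq_const_mul_thetaProduct (hτ : 0 < τ.im) :
    ∃ C ≠ 0, ∀ t, theta1 t τ = C * thetaProduct τ t := by
  have hzero {t : ℂ} (ht : thetaProduct τ t = 0) := inLattice_of_thetaProduct_eq_zero hτ ht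
  obtain ⟨C, hC⟩ := exists_eq_const_mul_of_quasiPeriodic hτ (differentiable_theta1 hτ)
    (differentiable_thetaProduct hτ) (quasiPeriodic_theta1_one τ) (quasiPeriodic_thetaProduct_one τ)
    (quasiPeriodic_theta1_tau τ) (quasiPeriodic_thetaProduct_tau hτ) fun t ht =>
      ⟨eq_zero_of_inLattice (quasiPeriodic_theta1_one τ) (quasiPeriodic_theta1_tau τ)
        (theta1_zero τ) (hzero ht),
      isSimpleZero_of_inLattice (differentiable_thetaProduct hτ) (quasiPeriodic_thetaProduct_one τ)
        (quasiPeriodic_thetaProduct_tau hτ) (isSimpleZero_thetaProduct_zero hτ) (hzero ht)⟩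
  refine ⟨C, ?_, hC⟩
  rintro rfl
  obtain ⟨t, ht⟩ := exists_theta1_ne_zero hτ
  exact ht (by rw [hC, zero_mul])

theorem inLattice_of_theta1_eq_zero (hτ : 0 < τ.im) {t : ℂ} (h : theta1 t τ = 0) :
    inLattice τ t := by
  obtain ⟨C, hC, hprod⟩ := exists_theta1_eq_const_mul_thetaProduct hτ
  rw [hprod] at h
  exact inLattice_of_thetaProduct_eq_zero hτ ((mul_eq_zero.1 h).resolve_left hC)

theorem theta1'_zero_ne_zero (hτ : 0 < τ.im) : theta1' 0 τ ≠ 0 := by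
  obtain ⟨C, hC, hprod⟩ := exists_theta1_eq_const_mul_thetaProduct hτ
  rw [theta1', funext hprod, deriv_const_mul_field']
  exact mul_ne_zero hC (isSimpleZero_thetaProduct_zero hτ).2

end ThetaZeros

section TrilinearIdentity

variable {τ : ℂ}

/-- `f k` is the `k`-th derivative of the entire function `f 0`. -/
def IsDerivTower (f : ℕ → ℂ → ℂ) : Prop := ∀ k z, HasDerivAt (f k) (f (k + 1) z) z

/-- With `f k` standing for the `k`-th derivative of a function `f`, the value at `(x, y, z)` of
`f'(0) (∂_x + ∂_y + ∂_z)² (f(x) f(y) f(z)) - f'''(0) f(x) f(y) f(z)`. For `f = ϑ₁` its vanishing on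
`x + y + z = 0` is the Frobenius–Stickelberger relation
`(ζ(x) + ζ(y) + ζ(z))² = ℘(x) + ℘(y) + ℘(z)`. -/
noncomputable def trilinearDefect (f : ℕ → ℂ → ℂ) (x y z : ℂ) : ℂ :=
  f 1 0 * (f 2 x * f 0 y * f 0 z + f 0 x * f 2 y * f 0 z + f 0 x * f 0 y * f 2 z +
    2 * (f 1 x * f 1 y * f 0 z + f 1 x * f 0 y * f 1 z + f 0 x * f 1 y * f 1 z)) -
  f 3 0 * (f 0 x * f 0 y * f 0 z)

theorem trilinearDefect_swap (f : ℕ → ℂ → ℂ) (x y z : ℂ) :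
    trilinearDefect f x y z = trilinearDefect f y x z := by
  unfold trilinearDefect; ring

theorem trilinearDefect_rotate (f : ℕ → ℂ → ℂ) (x y z : ℂ) :
    trilinearDefect f x y z = trilinearDefect f y z x := by
  unfold trilinearDefect; ring

variable {f : ℕ → ℂ → ℂ} {l a b a₁ b₁ a₂ b₂ : ℂ}

theorem QuasiPeriodic.apply_one_add (h : QuasiPeriodic (f 0) l a b) (hf : IsDerivTower f)
    (z : ℂ) :
    f 1 (z + l) = cexp (a * z + b) * (f 1 z + a * f 0 z) := by
  simpa only [(hf 0 _).deriv] using h.deriv_add (fun z => (hf 0 z).differentiableAt) z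

theorem QuasiPeriodic.apply_two_add (h : QuasiPeriodic (f 0) l a b) (hf : IsDerivTower f)
    (z : ℂ) :
    f 2 (z + l) = cexp (a * z + b) * (f 2 z + 2 * a * f 1 z + a ^ 2 * f 0 z) := by
  have hshift := (hf 1 (z + l)).comp_add_const z l
  rw [show (fun z => f 1 (z + l)) = _ from funext (h.apply_one_add hf)] at hshift
  rw [hshift.unique (hasDerivAt_cexp_affine_mul ((hf 1 z).add ((hf 0 z).const_mul a)) a b)]
  simp only [Pi.add_apply]
  ring

theorem QuasiPeriodic.comp_trilinearDefect (h : QuasiPeriodic (f 0) l a b) (hf : IsDerivTower f)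
    (w z : ℂ) :
    QuasiPeriodic (fun x => trilinearDefect f x (w - x) z) l (2 * a) (-(a * (w - l))) := by
  refine .of_exchange (b := b) (P := (trilinearDefect f · · z)) (fun x y => ?_) w
  simp only [trilinearDefect, h _, h.apply_one_add hf, h.apply_two_add hf]
  ring

theorem IsDerivTower.apply_neg (hf : IsDerivTower f)
    (hodd : ∀ z, f 0 (-z) = -f 0 z) (k : ℕ) (z : ℂ) : f k (-z) = (-1) ^ (k + 1) * f k z := by
  induction k generalizing z with
  | zero => rw [hodd]; ring
  | succ k ih =>
    have hderiv := deriv_comp_neg (f k) z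
    rw [funext ih, deriv_const_mul_field, (hf k z).deriv, (hf k (-z)).deriv] at hderiv
    linear_combination hderiv

theorem IsDerivTower.apply_zero_eq_zero (hf : IsDerivTower f) (hodd : ∀ z, f 0 (-z) = -f 0 z)
    {k : ℕ} (hk : Even k) : f k 0 = 0 := by
  have h := hf.apply_neg hodd k 0
  rw [neg_zero, hk.add_one.neg_one_pow, neg_one_mul] at h
  exact self_eq_neg.1 h

theorem trilinearDefect_zero_left (hf : IsDerivTower f) (hodd : ∀ z, f 0 (-z) = -f 0 z) (w : ℂ) :
    trilinearDefect f 0 w (-w) = 0 := by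
  have hneg := hf.apply_neg hodd
  have hf0 : f 0 0 = 0 := hf.apply_zero_eq_zero hodd Even.zero
  have hf2 : f 2 0 = 0 := hf.apply_zero_eq_zero hodd even_two
  simp only [trilinearDefect, hneg _ w, hf0, hf2]
  ring

theorem hasDerivAt_trilinearDefect_zero (hf : IsDerivTower f) (hodd : ∀ z, f 0 (-z) = -f 0 z)
    (w : ℂ) : HasDerivAt (fun x => trilinearDefect f x (w - x) (-w)) 0 0 := by
  have hneg := hf.apply_neg hodd
  have hf0 : f 0 0 = 0 := hf.apply_zero_eq_zero hodd Even.zero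
  have hf2 : f 2 0 = 0 := hf.apply_zero_eq_zero hodd even_two
  have hreflect (k : ℕ) : HasDerivAt (fun x => f k (w - x)) (-f (k + 1) w) 0 := by
    simpa using (hf k (w - 0)).comp_const_sub w 0
  have hprod (i j : ℕ) (c : ℂ) := ((hf i 0).mul (hreflect j)).mul_const c
  refine (((((hprod 2 0 (f 0 (-w))).add (hprod 0 2 (f 0 (-w)))).add (hprod 0 0 (f 2 (-w)))).add
    ((((hprod 1 1 (f 0 (-w))).add (hprod 1 0 (f 1 (-w)))).add (hprod 0 1 (f 1 (-w)))).const_mul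
      2)).const_mul (f 1 0)).sub ((hprod 0 0 (f 0 (-w))).const_mul (f 3 0)) |>.congr_deriv ?_
  simp only [hneg _ w, hf0, hf2, sub_zero]
  ring

theorem differentiable_trilinearDefect (hf : IsDerivTower f) (w z : ℂ) :
    Differentiable ℂ fun x => trilinearDefect f x (w - x) z := by
  have hd (k : ℕ) : Differentiable ℂ (f k) := fun x => (hf k x).differentiableAt
  unfold trilinearDefect
  fun_prop

theorem trilinearDefect_eq_zero_of_apply_ne_zero (hτ : 0 < τ.im) (hf : IsDerivTower f)
    (hodd : ∀ z, f 0 (-z) = -f 0 z) (h1 : QuasiPeriodic (f 0) 1 a₁ b₁)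
    (h2 : QuasiPeriodic (f 0) τ a₂ b₂) (hzero : ∀ z, f 0 z = 0 → inLattice τ z)
    (h0 : f 1 0 ≠ 0) {w : ℂ} (hw : f 0 w ≠ 0) (x : ℂ) :
    trilinearDefect f x (w - x) (-w) = 0 := by
  have hd : Differentiable ℂ (f 0) := fun z => (hf 0 z).differentiableAt
  have hf0 : f 0 0 = 0 := hf.apply_zero_eq_zero hodd Even.zero
  have hsimple : IsSimpleZero (f 0) 0 := ⟨hf0, by rwa [(hf 0 0).deriv]⟩
  have hD1 := h1.comp_trilinearDefect hf w (-w)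
  have hD2 := h2.comp_trilinearDefect hf w (-w)
  have hDzero {y : ℂ} (hy : f 0 y = 0) : trilinearDefect f y (w - y) (-w) = 0 :=
    eq_zero_of_inLattice hD1 hD2 (by simpa using trilinearDefect_zero_left hf hodd w) (hzero y hy)
  obtain ⟨C, hC⟩ := exists_eq_const_mul_of_quasiPeriodic hτ
    (differentiable_trilinearDefect hf w (-w)) (hd.mul (hd.comp (by fun_prop))) hD1
    (h1.mul_comp_const_sub w) hD2 (h2.mul_comp_const_sub w)
    fun y hy => ⟨(mul_eq_zero.1 hy).elim hDzero fun hwy => by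
      simpa [trilinearDefect_swap f _ y] using hDzero hwy,
      isSimpleZero_mul_comp_const_sub hd h1 h2 hsimple hzero hw hy⟩
  have hprod : HasDerivAt (fun x => C * (f 0 x * f 0 (w - x))) (C * (f 1 0 * f 0 w)) 0 :=
    (((hf 0 0).mul ((hf 0 (w - 0)).comp_const_sub w 0)).const_mul C).congr_deriv (by simp [hf0])
  have hC0 : C * (f 1 0 * f 0 w) = 0 :=
    hprod.unique (funext hC ▸ hasDerivAt_trilinearDefect_zero hf hodd w)
  rw [hC, (mul_eq_zero.1 hC0).resolve_right (mul_ne_zero h0 hw), zero_mul]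

theorem trilinearDefect_eq_zero_of_add_eq_zero (hτ : 0 < τ.im) (hf : IsDerivTower f)
    (hodd : ∀ z, f 0 (-z) = -f 0 z) (h1 : QuasiPeriodic (f 0) 1 a₁ b₁)
    (h2 : QuasiPeriodic (f 0) τ a₂ b₂) (hzero : ∀ z, f 0 z = 0 → inLattice τ z)
    (h0 : f 1 0 ≠ 0) {x y z : ℂ} (hxyz : x + y + z = 0) :
    trilinearDefect f x y z = 0 := by
  have eq_zero_of_third {x y z : ℂ} (hxyz : x + y + z = 0) (hz : f 0 z ≠ 0) :
      trilinearDefect f x y z = 0 := by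
    have hw : f 0 (-z) ≠ 0 := by rwa [hodd, neg_ne_zero]
    have := trilinearDefect_eq_zero_of_apply_ne_zero hτ hf hodd h1 h2 hzero h0 hw x
    rwa [neg_neg, show -z - x = y by linear_combination -hxyz] at this
  by_cases hz : f 0 z = 0
  · by_cases hx : f 0 x = 0
    · by_cases hy : f 0 y = 0
      · simp only [trilinearDefect, hx, hy, hz, mul_zero, zero_mul, add_zero, sub_zero]
      · rw [trilinearDefect_rotate, trilinearDefect_rotate]
        exact eq_zero_of_third (by linear_combination hxyz) hy
    · rw [trilinearDefect_rotate]
      exact eq_zero_of_third (by linear_combination hxyz) hx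
  · exact eq_zero_of_third hxyz hz

end TrilinearIdentity

section Sigma

local notation "ϑ" => theta1Deriv

variable {τ : ℂ}

theorem theta1_ne_zero (hτ : 0 < τ.im) {t : ℂ} (ht : ¬inLattice τ t) : theta1 t τ ≠ 0 :=
  fun h => ht (inLattice_of_theta1_eq_zero hτ h)

theorem trilinearDefect_theta1Deriv (hτ : 0 < τ.im) {x y z : ℂ} (hxyz : x + y + z = 0) :
    trilinearDefect (ϑ · · τ) x y z = 0 := by
  refine trilinearDefect_eq_zero_of_add_eq_zero (a₁ := 0) (b₁ := Real.pi * I)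
    (a₂ := -(2 * Real.pi * I)) (b₂ := Real.pi * I - Real.pi * I * τ) hτ
    (hasDerivAt_theta1Deriv hτ) ?_ ?_ ?_ ?_ ?_ hxyz
  · simpa only [theta1Deriv_zero] using (theta1_neg · τ)
  · simpa only [theta1Deriv_zero] using quasiPeriodic_theta1_one τ
  · simpa only [theta1Deriv_zero] using quasiPeriodic_theta1_tau τ
  · simpa only [theta1Deriv_zero] using fun _ => inLattice_of_theta1_eq_zero hτ
  · simpa only [theta1Deriv_one hτ] using theta1'_zero_ne_zero hτ

theorem sigmaF_eq_theta1Deriv (hτ : 0 < τ.im) (w t : ℂ) :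
    sigmaF w t τ = ϑ 0 (w - t) τ * ϑ 1 0 τ / (ϑ 0 w τ * ϑ 0 t τ) := by
  simp only [sigmaF, theta1Deriv_zero, theta1Deriv_one hτ]

theorem eventually_im_pos (hτ : 0 < τ.im) : ∀ᶠ s in 𝓝 τ, 0 < s.im :=
  Complex.continuous_im.continuousAt.eventually_const_lt hτ

theorem differentiableAt_theta1'_zero (hτ : 0 < τ.im) :
    DifferentiableAt ℂ (fun s => theta1' 0 s) τ :=
  (hasDerivAt_theta1Deriv_tau hτ 1 0).differentiableAt.congr_of_eventuallyEq <|
    (eventually_im_pos hτ).mono fun _ hs => (theta1Deriv_one hs 0).symm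

theorem differentiableAt_sigmaF {p : ℂ × ℂ × ℂ} (hτ : 0 < p.2.2.im)
    (hw : theta1 p.1 p.2.2 ≠ 0) (ht : theta1 p.2.1 p.2.2 ≠ 0) :
    DifferentiableAt ℂ (fun p : ℂ × ℂ × ℂ => sigmaF p.1 p.2.1 p.2.2) p := by
  have htheta {u : ℂ × ℂ × ℂ → ℂ} (hu : DifferentiableAt ℂ u p) :
      DifferentiableAt ℂ (fun p => theta1 (u p) p.2.2) p :=
    DifferentiableAt.comp p (g := fun q : ℂ × ℂ => theta1 q.1 q.2) (f := fun p => (u p, p.2.2))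
      (differentiableAt_theta1_prod hτ) (hu.prodMk (by fun_prop))
  have htheta' : DifferentiableAt ℂ (fun p : ℂ × ℂ × ℂ => theta1' 0 p.2.2) p :=
    (differentiableAt_theta1'_zero hτ).comp p differentiableAt_snd.snd
  have hnum := (htheta (differentiableAt_fst.fun_sub differentiableAt_snd.fst)).fun_mul htheta'
  have hden := (htheta differentiableAt_fst).fun_mul (htheta differentiableAt_snd.fst)
  simpa only [sigmaF, div_eq_mul_inv] using hnum.fun_mul (hden.fun_inv (mul_ne_zero hw ht))

theorem deriv_sigmaF_tau (hτ : 0 < τ.im) {w t : ℂ} (hw : theta1 w τ ≠ 0) (ht : theta1 t τ ≠ 0) :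
    2 * Real.pi * I * deriv (fun τ' => sigmaF w t τ') τ =
      ((ϑ 2 (w - t) τ * ϑ 1 0 τ + ϑ 0 (w - t) τ * ϑ 3 0 τ) * (ϑ 0 w τ * ϑ 0 t τ) -
        ϑ 0 (w - t) τ * ϑ 1 0 τ * (ϑ 2 w τ * ϑ 0 t τ + ϑ 0 w τ * ϑ 2 t τ)) /
      (2 * (ϑ 0 w τ * ϑ 0 t τ) ^ 2) := by
  rw [← theta1Deriv_zero] at hw ht
  have hd := hasDerivAt_theta1Deriv_tau hτ
  have hsigma := ((hd 0 (w - t)).mul (hd 1 0)).div ((hd 0 w).mul (hd 0 t)) (mul_ne_zero hw ht)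
  have heq : (fun τ' => sigmaF w t τ') =ᶠ[𝓝 τ] _ :=
    (eventually_im_pos hτ).mono fun s hs => sigmaF_eq_theta1Deriv hs w t
  rw [(hsigma.congr_of_eventuallyEq heq).deriv]
  have hpi : (Real.pi : ℂ) ≠ 0 := ofReal_ne_zero.2 Real.pi_ne_zero
  simp only [Pi.mul_apply]
  field_simp
  ring

theorem deriv_sigmaF_w (hτ : 0 < τ.im) {w : ℂ} (hw : theta1 w τ ≠ 0) (t : ℂ) :
    deriv (fun w' => sigmaF w' t τ) w =
      ϑ 1 0 τ / ϑ 0 w τ ^ 2 *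
        ((ϑ 1 (w - t) τ * ϑ 0 w τ - ϑ 0 (w - t) τ * ϑ 1 w τ) / ϑ 0 t τ) := by
  rw [← theta1Deriv_zero] at hw
  have hd := hasDerivAt_theta1Deriv hτ
  have hsigma := (((hd 0 (w - t)).comp_sub_const w t).div (hd 0 w) hw).const_mul
    (ϑ 1 0 τ / ϑ 0 t τ)
  have heq (w' : ℂ) : sigmaF w' t τ = ϑ 1 0 τ / ϑ 0 t τ * (ϑ 0 (w' - t) τ / ϑ 0 w' τ) := by
    rw [sigmaF_eq_theta1Deriv hτ]
    ring
  rw [funext heq]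
  exact hsigma.deriv.trans (by ring)

theorem deriv_deriv_sigmaF (hτ : 0 < τ.im) {w t : ℂ} (hw : theta1 w τ ≠ 0) (ht : theta1 t τ ≠ 0) :
    deriv (fun t' => deriv (fun w' => sigmaF w' t' τ) w) t =
      ϑ 1 0 τ / ϑ 0 w τ ^ 2 *
        (((ϑ 1 (w - t) τ * ϑ 1 w τ - ϑ 2 (w - t) τ * ϑ 0 w τ) * ϑ 0 t τ -
          (ϑ 1 (w - t) τ * ϑ 0 w τ - ϑ 0 (w - t) τ * ϑ 1 w τ) * ϑ 1 t τ) / ϑ 0 t τ ^ 2) := by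
  rw [funext (deriv_sigmaF_w hτ hw)]
  rw [← theta1Deriv_zero] at ht
  have hd (k : ℕ) := (hasDerivAt_theta1Deriv hτ k (w - t)).comp_const_sub w t
  have hsigma := ((((hd 1).mul_const (ϑ 0 w τ)).sub ((hd 0).mul_const (ϑ 1 w τ))).div
    (hasDerivAt_theta1Deriv hτ 0 t) ht).const_mul (ϑ 1 0 τ / ϑ 0 w τ ^ 2)
  refine hsigma.deriv.trans ?_
  simp only [Pi.sub_apply]
  ring

theorem deriv_tau_add_deriv_deriv_sigmaF (hτ : 0 < τ.im) {w t : ℂ} (hw : theta1 w τ ≠ 0)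
    (ht : theta1 t τ ≠ 0) :
    2 * Real.pi * I * deriv (fun τ' => sigmaF w t τ') τ +
      deriv (fun t' => deriv (fun w' => sigmaF w' t' τ) w) t =
    trilinearDefect (ϑ · · τ) t (w - t) (-w) / (2 * (ϑ 0 w τ * ϑ 0 t τ) ^ 2) := by
  have hodd (z : ℂ) : ϑ 0 (-z) τ = -ϑ 0 z τ := by simpa only [theta1Deriv_zero] using theta1_neg z τ
  have hneg := IsDerivTower.apply_neg (f := (ϑ · · τ)) (hasDerivAt_theta1Deriv hτ) hodd
  rw [deriv_sigmaF_tau hτ hw ht, deriv_deriv_sigmaF hτ hw ht]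
  rw [← theta1Deriv_zero] at hw ht
  simp only [trilinearDefect, hneg _ w]
  field_simp
  ring

end Sigma

/-- `(w,t,τ) ↦ σ_w(t,τ)` is holomorphic on
`{(w,t,τ) : τ ∈ H₊, w ∉ ℤ+τℤ, t ∉ ℤ+τℤ}` and satisfies there
`2πi·∂_τ σ_w(t,τ) + ∂_t ∂_w σ_w(t,τ) = 0` (closedness of the form `ω_w`). -/
theorem sigma_holomorphic_and_closed :
    DifferentiableOn ℂ (fun p : ℂ × ℂ × ℂ => sigmaF p.1 p.2.1 p.2.2)
      {p : ℂ × ℂ × ℂ | 0 < p.2.2.im ∧ ¬ inLattice p.2.2 p.1 ∧ ¬ inLattice p.2.2 p.2.1} ∧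
    ∀ w t τ : ℂ, 0 < τ.im → ¬ inLattice τ w → ¬ inLattice τ t →
      2 * (Real.pi : ℂ) * Complex.I * deriv (fun τ' => sigmaF w t τ') τ +
        deriv (fun t' => deriv (fun w' => sigmaF w' t' τ) w) t = 0 := by
  refine ⟨fun p ⟨hτ, hw, ht⟩ => (differentiableAt_sigmaF hτ (theta1_ne_zero hτ hw)
    (theta1_ne_zero hτ ht)).differentiableWithinAt, fun w t τ hτ hw ht => ?_⟩
  have hsum : t + (w - t) + -w = 0 := by ring
  rw [deriv_tau_add_deriv_deriv_sigmaF hτ (theta1_ne_zero hτ hw) (theta1_ne_zero hτ ht),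
    trilinearDefect_theta1Deriv hτ hsum, zero_div]
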